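/- arXiv:2505.00486 — 2 statements merged into one kernel-verified Lean document; each statement's English description precedes it below -/
import Mathlib

section
/- Let 1 ≤ k ≤ n, let δ be an integer with 1 ≤ δ ≤ ⌈n/2⌉ − 1, and let T : Fin ℓ → ℤ satisfy 1 ≤ T i ≤ k + n − 1 for every i. Let M be the number of nonempty subsets S ⊆ Fin ℓ with n ∣ ∑_{i∈S} T i. If M < 2^(ℓ − n + 1 + δ) − 1 (exponent via truncated natural-number subtraction), then there exist a subset I ⊆ Fin ℓ with |I| = n − δ, signs ε : Fin ℓ → ℤ with ε i ∈ {1, −1}, an element g of ZMod n of additive order n, and positive integers m i (i ∈ I) such that: the image of ε i · T i in ZMod n equals m i • g for every i ∈ I, ∑_{i∈I} m i < n, and the sequence (m i)_{i∈I} of positive integers is 1-smooth. (That is, the sequence of residues (T i mod n)_{i∈I} in ZMod n is signed g-smooth.) -/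
/-- The restriction of a sequence of positive integers to a finite index set `I` is
`1`-smooth if the set of sums of its nonempty subsequences supported in `I` equals the
integer interval `[1, ∑ i ∈ I, T i]`. -/
def IsOneSmoothOn {ℓ : ℕ} (T : Fin ℓ → ℤ) (I : Finset (Fin ℓ)) : Prop :=
  {s : ℤ | ∃ S ⊆ I, S.Nonempty ∧ ∑ i ∈ S, T i = s} = Set.Icc 1 (∑ i ∈ I, T i)

/-!
Counting: let `S` be a nonempty zero-sum set and `x ∈ S`. The zero-sum sets containing `x`
correspond, by symmetric difference with `S \ {x}`, to the zero-sum sets avoiding `x` of the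
sequence with the signs on `S \ {x}` flipped. So after removing `x`, for one of these two choices
of signs, at most half of the zero-sum sets remain. As the empty set always remains, repeating this
on a sequence with few zero-sum sets must end at a signed zero-sum free subsequence of length `D`.

Structure: a zero-sum free sequence of `d` terms in any abelian group with fewer than `2 d` subset
sums is smooth, by induction on `d`. If the removal of some `x` loses at least two subset sums, the
remaining sums form a progression `0, g, …, M g` by induction, and by counting this progression
meets its translate by `x`, so that `x` is a suitable multiple of `g`. If the removal of any term
loses at most one subset sum, then all terms are equal: a nonzero subset sum minus any term is again
a subset sum, so that for `x ≠ y` first `x - y` and then `-y` are subset sums. As `-y` is not a sum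
of terms other than `y`, it must be the one sum lost with `y`, the total. By symmetry so is `-x`.

In a finite group `G` with `|G| < 2 D`, the generator `g` has order greater than `M ≥ D > |G| / 2`,
and therefore equal to `|G|`.
-/

open Finset

section Definitions

variable {ι M : Type*} [AddCommMonoid M]

/-- A sequence is zero-sum free on `I` if none of its nonempty subsequences supported in `I` has
sum zero. -/
def ZeroSumFree (a : ι → M) (I : Finset ι) : Prop :=
  ∀ S ⊆ I, S.Nonempty → ∑ i ∈ S, a i ≠ 0

/-- The index sets of the zero-sum subsequences of `a` supported in `I`, the empty one included. -/
def zeroSums [DecidableEq M] (a : ι → M) (I : Finset ι) : Finset (Finset ι) :=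
  {S ∈ I.powerset | ∑ i ∈ S, a i = 0}

/-- The set `Σ(a, I)` of sums of subsequences of `a` supported in `I`, the empty sum included. -/
def subsetSums [DecidableEq M] (a : ι → M) (I : Finset ι) : Finset M :=
  I.powerset.image fun S => ∑ i ∈ S, a i

/-- The sequence `a` is `g`-smooth on `I` with coefficients `m`: `a i = m i • g`, and the subset
sums of `m` fill an interval. As the empty sum counts as a subset sum, the interval starts at `0`.
The coefficients are not required to be positive, nor their sum to be less than the order of `g`;
both are automatic where `a` is zero-sum free. -/
structure IsSmoothOn (a : ι → M) (I : Finset ι) (g : M) (m : ι → ℕ) : Prop where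
  eq_nsmul : ∀ i ∈ I, a i = m i • g
  subsetSums_eq : subsetSums m I = Iic (∑ i ∈ I, m i)

end Definitions

section ZeroSums

variable {ι G : Type*} [AddCommGroup G]

lemma piecewise_neg_eq_smul [DecidableEq ι] (a : ι → G) (R : Finset ι) :
    R.piecewise (-a) a = (R.piecewise (-1) 1 : ι → ℤˣ) • a := by
  ext i
  by_cases hi : i ∈ R <;> simp [hi]

lemma sum_piecewise_neg [DecidableEq ι] (a : ι → G) (S R : Finset ι) :
    ∑ i ∈ S, R.piecewise (-a) a i = ∑ i ∈ symmDiff S R, a i - ∑ i ∈ R, a i := by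
  have hsymm : ∑ i ∈ symmDiff S R, a i = ∑ i ∈ S \ R, a i + ∑ i ∈ R \ S, a i :=
    sum_union disjoint_sdiff_sdiff
  rw [sum_piecewise, hsymm, ← sum_inter_add_sum_sdiff R S a, inter_comm R S]
  simp only [Pi.neg_apply, sum_neg_distrib]
  abel

variable [DecidableEq G]

lemma mem_zeroSums {a : ι → G} {I S : Finset ι} :
    S ∈ zeroSums a I ↔ S ⊆ I ∧ ∑ i ∈ S, a i = 0 := by
  simp [zeroSums]

lemma card_zeroSums_univ [Fintype ι] (a : ι → G) :
    #(zeroSums a univ) = Nat.card {S : Finset ι // S.Nonempty ∧ ∑ i ∈ S, a i = 0} + 1 := by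
  classical
  have herase : (zeroSums a univ).erase ∅ = ({S | S.Nonempty ∧ ∑ i ∈ S, a i = 0} : Finset _) := by
    ext S
    simp [mem_zeroSums, nonempty_iff_ne_empty]
  rw [Nat.card_eq_fintype_card, Fintype.card_subtype, ← herase,
    card_erase_add_one (by simp [mem_zeroSums])]

lemma card_filter_sum_eq_sum [DecidableEq ι] (a : ι → G) {J R : Finset ι} (hR : R ⊆ J) :
    #{S ∈ J.powerset | ∑ i ∈ S, a i = ∑ i ∈ R, a i} = #(zeroSums (R.piecewise (-a) a) J) := by
  have hsub {S : Finset ι} (hS : S ⊆ J) : symmDiff S R ⊆ J := fun i hi =>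
    (mem_symmDiff.1 hi).elim (fun h => hS h.1) (fun h => hR h.1)
  refine card_nbij' (symmDiff · R) (symmDiff · R) ?_ ?_
    (fun S _ => symmDiff_symmDiff_cancel_right R S)
    (fun S _ => symmDiff_symmDiff_cancel_right R S)
  · intro S hS
    simp only [coe_filter, mem_powerset, Set.mem_ofPred_eq] at hS
    simp [mem_zeroSums, sum_piecewise_neg, hsub hS.1, hS.2]
  · intro S hS
    rw [mem_coe, mem_zeroSums, sum_piecewise_neg, sub_eq_zero] at hS
    simp [hsub hS.1, hS.2]

lemma card_zeroSums_insert [DecidableEq ι] {a : ι → G} {J R : Finset ι} {x : ι}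
    (hx : x ∉ J) (hR : R ⊆ J) (h : a x + ∑ i ∈ R, a i = 0) :
    #(zeroSums a (insert x J)) = #(zeroSums a J) + #(zeroSums (R.piecewise (-a) a) J) := by
  have hdisj : Disjoint (zeroSums a J)
      (image (insert x) {S ∈ J.powerset | ∑ i ∈ S, a i = ∑ i ∈ R, a i}) := by
    refine disjoint_left.2 fun S hS hS' => ?_
    obtain ⟨U, -, rfl⟩ := mem_image.1 hS'
    exact hx ((mem_zeroSums.1 hS).1 (mem_insert_self x U))
  have hinj : Set.InjOn (insert x) (J.powerset : Set (Finset ι)) := fun U hU V hV hUV => by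
    rw [← erase_insert (notMem_mono (mem_powerset.1 hU) hx), hUV,
      erase_insert (notMem_mono (mem_powerset.1 hV) hx)]
  have hunion : zeroSums a (insert x J) = zeroSums a J ∪
      image (insert x) {S ∈ J.powerset | ∑ i ∈ S, a i = ∑ i ∈ R, a i} := by
    rw [zeroSums, powerset_insert, filter_union, filter_image, zeroSums]
    congr 2
    refine filter_congr fun S hS => ?_
    rw [sum_insert (notMem_mono (mem_powerset.1 hS) hx), ← h, add_right_inj]
  rw [hunion, card_union_of_disjoint hdisj, ← card_filter_sum_eq_sum a hR,
    card_image_of_injOn (hinj.mono (filter_subset _ _))]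

theorem exists_zeroSumFree_of_card_zeroSums_lt (a : ι → G) (J : Finset ι) {D : ℕ}
    (h : #(zeroSums a J) < 2 ^ (#J + 1 - D)) :
    ∃ C ⊆ J, #C = D ∧ ∃ ε : ι → ℤˣ, ZeroSumFree (ε • a) C := by
  classical
  induction J using Finset.strongInduction generalizing a with
  | H J ih =>
    have hDJ : D ≤ #J := by
      by_contra! hJ
      have hpos : 0 < #(zeroSums a J) := card_pos.2 ⟨∅, by simp [mem_zeroSums]⟩
      rw [Nat.sub_eq_zero_of_le hJ, pow_zero] at h
      omega
    obtain ⟨C, hCJ, hC⟩ := exists_subset_card_eq hDJ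
    by_cases hfree : ZeroSumFree a C
    · exact ⟨C, hCJ, hC, 1, by rwa [one_smul]⟩
    obtain ⟨S, hSC, ⟨x, hx⟩, hS⟩ : ∃ S ⊆ C, S.Nonempty ∧ ∑ i ∈ S, a i = 0 := by
      simpa [ZeroSumFree] using hfree
    have hxJ : x ∈ J := hCJ (hSC hx)
    have hsplit := card_zeroSums_insert (notMem_erase x J) (erase_subset_erase x (hSC.trans hCJ))
      ((add_sum_erase S a hx).trans hS)
    rw [insert_erase hxJ] at hsplit
    have hpow : 2 ^ (#J + 1 - D) = 2 * 2 ^ (#(J.erase x) + 1 - D) := by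
      rw [← pow_succ', card_erase_of_mem hxJ]
      congr 1
      have := card_pos.2 ⟨x, hxJ⟩
      omega
    obtain hlt | hlt : #(zeroSums a (J.erase x)) < 2 ^ (#(J.erase x) + 1 - D) ∨
        #(zeroSums ((S.erase x).piecewise (-a) a) (J.erase x)) < 2 ^ (#(J.erase x) + 1 - D) := by
      omega
    · obtain ⟨C', hC', hcard, hε⟩ := ih _ (erase_ssubset hxJ) a hlt
      exact ⟨C', hC'.trans (erase_subset x J), hcard, hε⟩
    · obtain ⟨C', hC', hcard, ε, hε⟩ := ih _ (erase_ssubset hxJ) _ hlt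
      rw [piecewise_neg_eq_smul, smul_smul] at hε
      exact ⟨C', hC'.trans (erase_subset x J), hcard, _, hε⟩

end ZeroSums

section SubsetSums

variable {ι M : Type*} [AddCommMonoid M] [DecidableEq M] {a : ι → M} {I J : Finset ι}

lemma subsetSums_congr {b : ι → M} (h : ∀ i ∈ I, a i = b i) : subsetSums a I = subsetSums b I :=
  image_congr fun _ hS => sum_congr rfl fun i hi => h i (mem_powerset.1 hS hi)

lemma mem_subsetSums {b : M} : b ∈ subsetSums a I ↔ ∃ S ⊆ I, ∑ i ∈ S, a i = b := by
  simp [subsetSums]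

lemma sum_mem_subsetSums (h : J ⊆ I) : ∑ i ∈ J, a i ∈ subsetSums a I :=
  mem_subsetSums.2 ⟨J, h, rfl⟩

lemma subsetSums_mono (h : J ⊆ I) : subsetSums a J ⊆ subsetSums a I :=
  image_subset_image (powerset_mono.2 h)

lemma subsetSums_insert [DecidableEq ι] {x : ι} (hx : x ∉ I) :
    subsetSums a (insert x I) = subsetSums a I ∪ (subsetSums a I).image (a x + ·) := by
  simp only [subsetSums, powerset_insert, image_union, image_image]
  congr 1
  exact image_congr fun S hS => sum_insert (notMem_mono (mem_powerset.1 hS) hx)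

end SubsetSums

section ZeroSumFree

variable {ι G : Type*} [AddCommGroup G] {a : ι → G} {I J : Finset ι}

lemma ZeroSumFree.mono (h : ZeroSumFree a I) (hJ : J ⊆ I) : ZeroSumFree a J :=
  fun S hS => h S (hS.trans hJ)

lemma ZeroSumFree.ne_zero (h : ZeroSumFree a I) {x : ι} (hx : x ∈ I) : a x ≠ 0 := by
  simpa using h {x} (singleton_subset_iff.2 hx) (singleton_nonempty x)

variable [DecidableEq G]

lemma sub_mem_subsetSums {b : G} (hb : b ∈ subsetSums a I) :
    ∑ i ∈ I, a i - b ∈ subsetSums a I := by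
  classical
  obtain ⟨S, hS, rfl⟩ := mem_subsetSums.1 hb
  rw [← sum_sdiff_eq_sub hS]
  exact sum_mem_subsetSums sdiff_subset

section Erase

variable [DecidableEq ι] {x y : ι}

lemma ZeroSumFree.neg_notMem_subsetSums_erase (h : ZeroSumFree a I) (hx : x ∈ I) :
    -a x ∉ subsetSums a (I.erase x) := fun hmem => by
  obtain ⟨S, hS, hsum⟩ := mem_subsetSums.1 hmem
  obtain ⟨hSI, hxS⟩ := subset_erase.1 hS
  refine h (insert x S) (insert_subset hx hSI) (insert_nonempty x S) ?_
  rw [sum_insert hxS, hsum, add_neg_cancel]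

lemma ZeroSumFree.sum_notMem_subsetSums_erase (h : ZeroSumFree a I) (hx : x ∈ I) :
    ∑ i ∈ I, a i ∉ subsetSums a (I.erase x) := fun hmem =>
  h.neg_notMem_subsetSums_erase hx (by simpa [sum_erase_eq_sub hx] using sub_mem_subsetSums hmem)

lemma ZeroSumFree.mem_subsetSums_erase (h : ZeroSumFree a I) (hx : x ∈ I)
    (hcard : #(subsetSums a I) ≤ #(subsetSums a (I.erase x)) + 1) {b : G}
    (hb : b ∈ subsetSums a I) (hbσ : b ≠ ∑ i ∈ I, a i) : b ∈ subsetSums a (I.erase x) := by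
  have hsub : subsetSums a (I.erase x) ⊆ (subsetSums a I).erase (∑ i ∈ I, a i) :=
    subset_erase.2 ⟨subsetSums_mono (erase_subset x I), h.sum_notMem_subsetSums_erase hx⟩
  have hle : #((subsetSums a I).erase (∑ i ∈ I, a i)) ≤ #(subsetSums a (I.erase x)) := by
    rw [card_erase_of_mem (sum_mem_subsetSums Subset.rfl)]
    omega
  rw [eq_of_subset_of_card_le hsub hle]
  exact mem_erase.2 ⟨hbσ, hb⟩

lemma ZeroSumFree.sub_mem_subsetSums_erase (h : ZeroSumFree a I) (hx : x ∈ I)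
    (hcard : #(subsetSums a I) ≤ #(subsetSums a (I.erase x)) + 1) {b : G}
    (hb : b ∈ subsetSums a I) (hb0 : b ≠ 0) : b - a x ∈ subsetSums a (I.erase x) := by
  have hcompl : ∑ i ∈ I, a i - b ∈ subsetSums a (I.erase x) :=
    h.mem_subsetSums_erase hx hcard (sub_mem_subsetSums hb) (by simpa using hb0)
  convert sub_mem_subsetSums hcompl using 1
  rw [sum_erase_eq_sub hx]
  abel

lemma ZeroSumFree.sum_eq_neg_of_ne (h : ZeroSumFree a I)
    (hcard : ∀ x ∈ I, #(subsetSums a I) ≤ #(subsetSums a (I.erase x)) + 1)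
    (hx : x ∈ I) (hy : y ∈ I) (hxy : a x ≠ a y) : ∑ i ∈ I, a i = -a y := by
  have hax : a x ∈ subsetSums a I := by
    simpa using sum_mem_subsetSums (a := a) (singleton_subset_iff.2 hx)
  have hsub : a x - a y ∈ subsetSums a I := subsetSums_mono (erase_subset y I) <|
    h.sub_mem_subsetSums_erase hy (hcard y hy) hax (h.ne_zero hx)
  have hneg : -a y ∈ subsetSums a I := subsetSums_mono (erase_subset x I) <| by
    simpa using h.sub_mem_subsetSums_erase hx (hcard x hx) hsub (sub_ne_zero.2 hxy)
  by_contra hne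
  exact h.neg_notMem_subsetSums_erase hy <|
    h.mem_subsetSums_erase hy (hcard y hy) hneg (Ne.symm hne)

lemma ZeroSumFree.eq_of_card_subsetSums_le (h : ZeroSumFree a I)
    (hcard : ∀ x ∈ I, #(subsetSums a I) ≤ #(subsetSums a (I.erase x)) + 1)
    (hx : x ∈ I) (hy : y ∈ I) : a x = a y := by
  by_contra hxy
  exact hxy <| neg_injective <|
    (h.sum_eq_neg_of_ne hcard hy hx (Ne.symm hxy)).symm.trans (h.sum_eq_neg_of_ne hcard hx hy hxy)

end Erase

lemma ZeroSumFree.card_lt_card_subsetSums (h : ZeroSumFree a I) : #I < #(subsetSums a I) := by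
  classical
  induction I using Finset.induction_on with
  | empty => simp [subsetSums]
  | insert x I hx ih =>
    have hσ : ∑ i ∈ insert x I, a i ∉ subsetSums a I := by
      simpa only [erase_insert hx] using h.sum_notMem_subsetSums_erase (mem_insert_self x I)
    have hssub : subsetSums a I ⊂ subsetSums a (insert x I) :=
      (ssubset_iff_of_subset (subsetSums_mono (subset_insert x I))).2
        ⟨_, sum_mem_subsetSums Subset.rfl, hσ⟩
    rw [card_insert_of_notMem hx]
    exact (Nat.succ_le_of_lt (ih (h.mono (subset_insert x I)))).trans_lt (card_lt_card hssub)

end ZeroSumFree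

section Smooth

variable {ι G : Type*} [AddCommGroup G] {a : ι → G} {I : Finset ι} {g : G} {m : ι → ℕ}

lemma IsSmoothOn.sum_eq {S : Finset ι} (h : IsSmoothOn a I g m) (hS : S ⊆ I) :
    ∑ i ∈ S, a i = (∑ i ∈ S, m i) • g := by
  rw [← sum_nsmul_assoc]
  exact sum_congr rfl fun i hi => h.eq_nsmul i (hS hi)

lemma IsSmoothOn.exists_sum_eq (h : IsSmoothOn a I g m) {v : ℕ} (hv : v ≤ ∑ i ∈ I, m i) :
    ∃ S ⊆ I, ∑ i ∈ S, m i = v := by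
  rwa [← mem_subsetSums, h.subsetSums_eq, mem_Iic]

lemma IsSmoothOn.mem_subsetSums_iff [DecidableEq G] (h : IsSmoothOn a I g m) {b : G} :
    b ∈ subsetSums a I ↔ ∃ v ≤ ∑ i ∈ I, m i, v • g = b := by
  rw [mem_subsetSums]
  constructor
  · rintro ⟨S, hS, rfl⟩
    exact ⟨_, sum_le_sum_of_subset hS, (h.sum_eq hS).symm⟩
  · rintro ⟨v, hv, rfl⟩
    obtain ⟨S, hS, rfl⟩ := h.exists_sum_eq hv
    exact ⟨S, hS, h.sum_eq hS⟩

lemma IsSmoothOn.coeff_pos (h : IsSmoothOn a I g m) (hfree : ZeroSumFree a I) {i : ι}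
    (hi : i ∈ I) : 0 < m i := by
  refine Nat.pos_of_ne_zero fun hm => hfree.ne_zero hi ?_
  rw [h.eq_nsmul i hi, hm, zero_nsmul]

lemma IsSmoothOn.sum_lt_addOrderOf [Finite G] (h : IsSmoothOn a I g m) (hfree : ZeroSumFree a I) :
    ∑ i ∈ I, m i < addOrderOf g := by
  by_contra! hle
  obtain ⟨S, hS, hsum⟩ := h.exists_sum_eq hle
  have hne : S.Nonempty := nonempty_of_sum_ne_zero (hsum.trans_ne (addOrderOf_pos g).ne')
  refine hfree S hS hne ?_
  rw [h.sum_eq hS, hsum, addOrderOf_nsmul_eq_zero]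

lemma IsSmoothOn.addOrderOf_eq_card [Finite G] (h : IsSmoothOn a I g m) (hfree : ZeroSumFree a I)
    (hcard : Nat.card G < 2 * #I) : addOrderOf g = Nat.card G := by
  have hle : #I ≤ ∑ i ∈ I, m i := by
    simpa using card_nsmul_le_sum I m 1 fun i hi => h.coeff_pos hfree hi
  have hlt := h.sum_lt_addOrderOf hfree
  exact (Nat.eq_of_dvd_of_lt_two_mul Nat.card_pos.ne' (addOrderOf_dvd_natCard g) (by omega)).symm

lemma IsSmoothOn.of_forall_eq (h : ∀ i ∈ I, a i = g) : IsSmoothOn a I g 1 where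
  eq_nsmul i hi := by rw [h i hi, Pi.one_apply, one_nsmul]
  subsetSums_eq := by
    ext v
    rw [mem_subsetSums, mem_Iic]
    constructor
    · rintro ⟨S, hS, rfl⟩
      exact sum_le_sum_of_subset hS
    · intro hv
      obtain ⟨S, hS, hcard⟩ := exists_subset_card_eq (s := I) (n := v) (by simpa using hv)
      exact ⟨S, hS, by simpa using hcard⟩

lemma IsSmoothOn.insert [DecidableEq ι] {x : ι} (h : IsSmoothOn a I g m) (hx : x ∉ I) {r : ℕ}
    (hax : a x = r • g) (hr : r ≤ ∑ i ∈ I, m i + 1) :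
    IsSmoothOn a (insert x I) g (Function.update m x r) where
  eq_nsmul i hi := by
    obtain rfl | hiI := mem_insert.1 hi
    · rw [hax, Function.update_self]
    · rw [h.eq_nsmul i hiI, Function.update_of_ne (ne_of_mem_of_not_mem hiI hx)]
  subsetSums_eq := by
    have hcongr : subsetSums (Function.update m x r) I = Iic (∑ i ∈ I, m i) :=
      (subsetSums_congr fun i hi =>
        Function.update_of_ne (ne_of_mem_of_not_mem hi hx) r m).trans h.subsetSums_eq
    rw [subsetSums_insert hx, sum_insert hx, sum_update_of_notMem hx, hcongr, Function.update_self]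
    ext v
    simp only [mem_union, mem_image, mem_Iic]
    constructor
    · rintro (hv | ⟨u, hu, rfl⟩) <;> omega
    · intro hv
      by_cases hle : v ≤ ∑ i ∈ I, m i
      · exact Or.inl hle
      · exact Or.inr ⟨v - r, by omega, by omega⟩

lemma IsSmoothOn.exists_nsmul_of_not_disjoint [DecidableEq ι] [DecidableEq G] {x : ι}
    (h : IsSmoothOn a (I.erase x) g m) (hfree : ZeroSumFree a I) (hx : x ∈ I)
    (hmeet : ¬ Disjoint (subsetSums a (I.erase x)) ((subsetSums a (I.erase x)).image (a x + ·))) :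
    ∃ r ≤ ∑ i ∈ I.erase x, m i, a x = r • g := by
  obtain ⟨_, hp, hq⟩ := not_disjoint_iff.1 hmeet
  obtain ⟨c, hc, rfl⟩ := mem_image.1 hq
  obtain ⟨q, hqM, rfl⟩ := h.mem_subsetSums_iff.1 hc
  obtain ⟨p, hpM, hpq⟩ := h.mem_subsetSums_iff.1 hp
  have hax : a x = p • g - q • g := eq_sub_of_add_eq hpq.symm
  obtain hle | hlt := le_total q p
  · exact ⟨p - q, by omega, by rw [hax, sub_nsmul g hle, sub_eq_add_neg]⟩
  · refine absurd (h.mem_subsetSums_iff.2 ⟨q - p, by omega, ?_⟩)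
      (hfree.neg_notMem_subsetSums_erase hx)
    rw [hax, neg_sub, sub_nsmul g hlt, sub_eq_add_neg]

theorem ZeroSumFree.exists_isSmoothOn [DecidableEq G] (h : ZeroSumFree a I)
    (hcard : #(subsetSums a I) < 2 * #I) : ∃ g m, IsSmoothOn a I g m := by
  classical
  induction I using Finset.strongInduction with
  | H I ih =>
    by_cases hone : ∀ x ∈ I, #(subsetSums a I) ≤ #(subsetSums a (I.erase x)) + 1
    · obtain ⟨x, hx⟩ : I.Nonempty := card_pos.1 (by omega)
      exact ⟨a x, 1, .of_forall_eq fun i hi => h.eq_of_card_subsetSums_le hone hi hx⟩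
    push Not at hone
    obtain ⟨x, hx, htwo⟩ := hone
    have hfree := h.mono (erase_subset x I)
    have hI := card_erase_add_one hx
    obtain ⟨g, m, hm⟩ := ih (I.erase x) (erase_ssubset hx) hfree (by omega)
    have hunion := subsetSums_insert (a := a) (notMem_erase x I)
    rw [insert_erase hx] at hunion
    have hmeet : ¬ Disjoint (subsetSums a (I.erase x))
        ((subsetSums a (I.erase x)).image (a x + ·)) := fun hdisj => by
      rw [hunion, card_union_of_disjoint hdisj,
        card_image_of_injective _ (add_right_injective (a x))] at hcard
      have := hfree.card_lt_card_subsetSums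
      omega
    obtain ⟨r, hr, hax⟩ := hm.exists_nsmul_of_not_disjoint h hx hmeet
    rw [← insert_erase hx]
    exact ⟨g, _, hm.insert (notMem_erase x I) hax (by omega)⟩

end Smooth

lemma isOneSmoothOn_natCast {ℓ : ℕ} {m : Fin ℓ → ℕ} {I : Finset (Fin ℓ)}
    (hpos : ∀ i ∈ I, 0 < m i) (h : subsetSums m I = Iic (∑ i ∈ I, m i)) :
    IsOneSmoothOn (fun i => (m i : ℤ)) I := by
  ext s
  simp only [Set.mem_ofPred_eq, Set.mem_Icc, ← Nat.cast_sum]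
  constructor
  · rintro ⟨S, hS, hne, rfl⟩
    have hSpos : 0 < ∑ i ∈ S, m i := sum_pos (fun i hi => hpos i (hS hi)) hne
    have hSle : ∑ i ∈ S, m i ≤ ∑ i ∈ I, m i := sum_le_sum_of_subset hS
    omega
  · rintro ⟨hs1, hs2⟩
    obtain ⟨S, hS, hsum⟩ : ∃ S ⊆ I, ∑ i ∈ S, m i = s.toNat := by
      rw [← mem_subsetSums, h, mem_Iic]
      omega
    exact ⟨S, hS, nonempty_of_sum_ne_zero (f := m) (by omega), by omega⟩

theorem stmt9_general {G : Type*} [AddCommGroup G] [Finite G] {ℓ D : ℕ}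
    (hD : Nat.card G < 2 * D) (a : Fin ℓ → G)
    (hM : Nat.card {S : Finset (Fin ℓ) // S.Nonempty ∧ ∑ i ∈ S, a i = 0}
      < 2 ^ (ℓ + 1 - D) - 1) :
    ∃ I : Finset (Fin ℓ), I.card = D ∧
      ∃ ε : Fin ℓ → ℤ, (∀ i, ε i = 1 ∨ ε i = -1) ∧
      ∃ g : G, addOrderOf g = Nat.card G ∧
      ∃ m : Fin ℓ → ℤ, (∀ i ∈ I, 1 ≤ m i) ∧
        (∀ i ∈ I, ε i • a i = m i • g) ∧
        (∑ i ∈ I, m i) < (Nat.card G : ℤ) ∧ IsOneSmoothOn m I := by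
  classical
  have := Fintype.ofFinite G
  have hcount := card_zeroSums_univ a
  obtain ⟨I, -, rfl, ε, hfree⟩ :=
    exists_zeroSumFree_of_card_zeroSums_lt a univ (D := D) (by rw [card_fin]; omega)
  have hcard : #(subsetSums (ε • a) I) ≤ Nat.card G :=
    (card_le_univ _).trans_eq Nat.card_eq_fintype_card.symm
  obtain ⟨g, m, hm⟩ := hfree.exists_isSmoothOn (hcard.trans_lt hD)
  have hpos : ∀ i ∈ I, 0 < m i := fun i hi => hm.coeff_pos hfree hi
  have horder := hm.addOrderOf_eq_card hfree hD
  refine ⟨I, rfl, fun i => ε i, fun i => Int.isUnit_iff.1 (ε i).isUnit, g, horder,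
    fun i => m i, fun i hi => Int.natCast_pos.2 (hpos i hi), fun i hi => ?_, ?_,
    isOneSmoothOn_natCast hpos hm.subsetSums_eq⟩
  · rw [natCast_zsmul]
    exact hm.eq_nsmul i hi
  · rw [← Nat.cast_sum, Nat.cast_lt]
    exact (hm.sum_lt_addOrderOf hfree).trans_eq horder

theorem stmt9 {k n ℓ : ℕ} (hk : 1 ≤ k) (hkn : k ≤ n) (δ : ℕ) (hδ1 : 1 ≤ δ)
    (hδ2 : δ ≤ (n + 1) / 2 - 1) (T : Fin ℓ → ℤ)
    (hT : ∀ i, 1 ≤ T i ∧ T i ≤ (k : ℤ) + n - 1)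
    (hM : Nat.card {S : Finset (Fin ℓ) // S.Nonempty ∧ (n : ℤ) ∣ ∑ i ∈ S, T i}
      < 2 ^ (ℓ + 1 + δ - n) - 1) :
    ∃ I : Finset (Fin ℓ), I.card = n - δ ∧
      ∃ ε : Fin ℓ → ℤ, (∀ i, ε i = 1 ∨ ε i = -1) ∧
      ∃ g : ZMod n, addOrderOf g = n ∧
      ∃ m : Fin ℓ → ℤ, (∀ i ∈ I, 1 ≤ m i) ∧
        (∀ i ∈ I, ((ε i * T i : ℤ) : ZMod n) = m i • g) ∧
        (∑ i ∈ I, m i) < (n : ℤ) ∧ IsOneSmoothOn m I := by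
  have : NeZero n := ⟨by omega⟩
  simp only [← ZMod.intCast_zmod_eq_zero_iff_dvd, Int.cast_sum,
    show ℓ + 1 + δ - n = ℓ + 1 - (n - δ) by omega] at hM
  simpa using stmt9_general (by rw [Nat.card_zmod]; omega) (fun i => (T i : ZMod n)) hM
end

section
/- Let k > n ≥ 1 and let δ ≥ 1 be an integer with 2δ + 3n ≤ 2·⌈(⌈k/n⌉·n)/2⌉ (i.e., δ ≤ ⌈(⌈k/n⌉ n)/2⌉ − 3n/2). Let T : Fin ℓ → ℤ satisfy 1 ≤ T i ≤ k + n − 1 for every i, and let M be the number of nonempty subsets S ⊆ Fin ℓ with n ∣ ∑_{i∈S} T i and ∑_{i∈S} T i ≥ ⌈k/n⌉·n. If M < 2^(ℓ − ⌈k/n⌉·n + 1 + δ) − 1 (exponent via truncated natural-number subtraction), then ∑_{i} (T i − 1) ≤ δ − 1; in particular, the number of indices i with T i ≥ 2 is at most δ − 1 and all other terms equal 1. -/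
/-!
Write `L = ⌈k/n⌉ n` and suppose `∑ (T i - 1) ≥ δ`. It has to be shown that at least
`2 ^ (ℓ + 1 + δ - L) - 1` sets `S` satisfy `n ∣ ∑_{i ∈ S} T i ≥ L`.

If at least `n - 1` terms are equal to `1`, fix a set `Y` of `L - δ - 1` indices that contains
`n - 1` ones and has sum at least `L - 1`; this is possible because at most `δ` terms suffice to
produce the excess `δ`. For every nonempty `A` disjoint from `Y`, the sum over `Y ∪ A` is at least
`L`, and deleting fewer than `n` ones from it rounds it down to a multiple of `n`, still at least
`L` since `n ∣ L`. The set `A` can be recovered from the result.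

If at most `n - 2` terms are equal to `1`, Olson's bound on the number of subsets with a given sum
in a finite abelian group yields a set `U` of `L - δ - n` indices that has `2 ^ (ℓ + 1 + δ - L)`
supersets with sum divisible by `n`. All but at most `n - 2` of the terms in `U` are at least `2`,
so the sum over `U` is already at least `2 * (L - δ - n) - (n - 2) ≥ L`.
-/

section

open Finset
open scoped symmDiff

section ZeroSum

variable {ι G : Type*} [AddCommGroup G]

/-- `d` is an upper bound for the Davenport constant of `G`: every sequence of `d` elements of `G`
has a nonempty subsequence with sum zero. -/
def IsDavenportBound (G : Type*) [AddCommGroup G] (d : ℕ) : Prop :=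
  ∀ g : Fin d → G, ∃ Q : Finset (Fin d), Q.Nonempty ∧ ∑ i ∈ Q, g i = 0

theorem isDavenportBound_natCard [Finite G] : IsDavenportBound G (Nat.card G) := by
  intro g
  have := Fintype.ofFinite G
  let initial : Fin (Nat.card G + 1) → Finset (Fin (Nat.card G)) := fun j => {i | i.castSucc < j}
  obtain ⟨a, b, hne, hab⟩ := Fintype.exists_ne_map_eq_of_card_lt
    (fun j => ∑ i ∈ initial j, g i) (by simp)
  wlog hlt : a < b generalizing a b
  · exact this b a hne.symm hab.symm (hne.lt_or_gt.resolve_left hlt)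
  have hsub : initial a ⊆ initial b :=
    monotone_filter_right _ fun _ _ hi => hi.trans hlt
  refine ⟨initial b \ initial a, ⟨a.castLT (by omega), ?_⟩, ?_⟩
  · simp [initial, hlt]
  · rw [sum_sdiff_eq_sub hsub, sub_eq_zero]
    exact hab.symm

theorem sum_symmDiff_eq_add_sum_ite [DecidableEq ι] (g : ι → G) (R Q : Finset ι) :
    ∑ i ∈ R ∆ Q, g i = ∑ i ∈ R, g i + ∑ i ∈ Q, if i ∈ R then -g i else g i := by
  have hdisj : Disjoint (R \ Q) (Q \ R) := disjoint_sdiff_sdiff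
  rw [symmDiff_def, sup_eq_union, sum_union hdisj, sum_ite, filter_mem_eq_inter,
    filter_notMem_eq_sdiff, sum_neg_distrib, ← sum_inter_add_sum_sdiff R Q, inter_comm Q R]
  abel

/-- The subsets of `W` over which `g` sums to `h`: the solution set counted by Olson's bound. -/
def subsetsWithSum [DecidableEq G] (g : ι → G) (W : Finset ι) (h : G) : Finset (Finset ι) :=
  {R ∈ W.powerset | ∑ i ∈ R, g i = h}

theorem mem_subsetsWithSum [DecidableEq G] {g : ι → G} {W R : Finset ι} {h : G} :
    R ∈ subsetsWithSum g W h ↔ R ⊆ W ∧ ∑ i ∈ R, g i = h := by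
  simp [subsetsWithSum]

theorem mem_subsetsWithSum_erase_of_notMem [DecidableEq ι] [DecidableEq G] {g : ι → G}
    {W R : Finset ι} {h : G} {x : ι} (hR : R ∈ subsetsWithSum g W h) (hx : x ∉ R) :
    R ∈ subsetsWithSum g (W.erase x) h := by
  rw [mem_subsetsWithSum] at hR ⊢
  exact ⟨subset_erase.mpr ⟨hR.1, hx⟩, hR.2⟩

theorem erase_mem_subsetsWithSum_erase [DecidableEq ι] [DecidableEq G] {g : ι → G}
    {W R : Finset ι} {h : G} {x : ι} (hR : R ∈ subsetsWithSum g W h) (hx : x ∈ R) :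
    R.erase x ∈ subsetsWithSum g (W.erase x) (h - g x) := by
  rw [mem_subsetsWithSum] at hR ⊢
  exact ⟨erase_subset_erase x hR.1, by rw [sum_erase_eq_sub hx, hR.2]⟩

theorem card_subsetsWithSum_insert [DecidableEq ι] [DecidableEq G] (g : ι → G)
    {V : Finset ι} {x : ι} (hx : x ∉ V) (h : G) :
    #(subsetsWithSum g (insert x V) h) =
      #(subsetsWithSum g V h) + #(subsetsWithSum g V (h - g x)) := by
  simp only [subsetsWithSum, card_filter]
  rw [sum_powerset_insert hx]
  congr 1
  refine sum_congr rfl fun R hR => ?_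
  have hxR : x ∉ R := fun h => hx (mem_powerset.mp hR h)
  simp only [sum_insert hxR, eq_sub_iff_add_eq']

namespace IsDavenportBound

variable {d : ℕ}

theorem exists_subset_sum_eq_zero (hd : IsDavenportBound G d) (g : ι → G) {W : Finset ι}
    (hW : d ≤ #W) : ∃ Q ⊆ W, Q.Nonempty ∧ ∑ i ∈ Q, g i = 0 := by
  obtain ⟨V, hVW, hV⟩ := exists_subset_card_eq hW
  let e : Fin d ↪ ι := (V.equivFinOfCardEq hV).symm.toEmbedding.trans (.subtype _)
  obtain ⟨Q, hQ, hsum⟩ := hd (g ∘ e)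
  refine ⟨Q.map e, fun x hx => ?_, hQ.map, by simpa using hsum⟩
  obtain ⟨i, -, rfl⟩ := mem_map.mp hx
  exact hVW ((V.equivFinOfCardEq hV).symm i).2

theorem exists_card_lt_sum_eq (hd : IsDavenportBound G d) (g : ι → G) (V : Finset ι) :
    ∃ Z ⊆ V, #Z < d ∧ ∑ i ∈ Z, g i = ∑ i ∈ V, g i := by
  classical
  induction V using Finset.strongInduction with
  | H V ih =>
    by_cases hV : #V < d
    · exact ⟨V, Subset.rfl, hV, rfl⟩
    obtain ⟨Q, hQV, hQ, hsum⟩ := hd.exists_subset_sum_eq_zero g (not_lt.mp hV)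
    obtain ⟨Z, hZ, hZd, hZsum⟩ := ih (V \ Q) (sdiff_ssubset hQV hQ)
    exact ⟨Z, hZ.trans sdiff_subset, hZd, by rw [hZsum, sum_sdiff_eq_sub hQV, hsum, sub_zero]⟩

theorem exists_ne_sum_eq (hd : IsDavenportBound G d) (g : ι → G) {W R : Finset ι}
    (hW : d ≤ #W) (hR : R ⊆ W) : ∃ R' ⊆ W, R' ≠ R ∧ ∑ i ∈ R', g i = ∑ i ∈ R, g i := by
  classical
  obtain ⟨Q, hQW, hQ, hsum⟩ :=
    hd.exists_subset_sum_eq_zero (fun i => if i ∈ R then -g i else g i) hW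
  refine ⟨R ∆ Q, ?_, ?_, ?_⟩
  · exact symmDiff_le_sup.trans (union_subset hR hQW)
  · exact fun h => hQ.ne_empty (symmDiff_eq_left.mp h)
  · rw [sum_symmDiff_eq_add_sum_ite, hsum, add_zero]

theorem exists_mem_subsetsWithSum_erase [DecidableEq ι] [DecidableEq G]
    (hd : IsDavenportBound G d) {g : ι → G} {W : Finset ι} {h : G} (hW : d ≤ #W)
    (hne : (subsetsWithSum g W h).Nonempty) :
    ∃ x ∈ W, (subsetsWithSum g (W.erase x) h).Nonempty ∧
      (subsetsWithSum g (W.erase x) (h - g x)).Nonempty := by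
  obtain ⟨R, hR, R', hR', x, hxR, hxR'⟩ :
      ∃ R ∈ subsetsWithSum g W h, ∃ R' ∈ subsetsWithSum g W h, ∃ x ∈ R, x ∉ R' := by
    obtain ⟨R, hR⟩ := hne
    obtain ⟨hRW, hRsum⟩ := mem_subsetsWithSum.mp hR
    obtain ⟨R', hR'W, hR'R, hsum⟩ := hd.exists_ne_sum_eq g hW hRW
    have hR' : R' ∈ subsetsWithSum g W h := mem_subsetsWithSum.mpr ⟨hR'W, hsum.trans hRsum⟩
    by_cases hsub : R' ⊆ R
    · exact ⟨R, hR, R', hR', exists_of_ssubset (hsub.ssubset_of_ne hR'R)⟩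
    · exact ⟨R', hR', R, hR, not_subset.mp hsub⟩
  exact ⟨x, (mem_subsetsWithSum.mp hR).1 hxR,
    ⟨R', mem_subsetsWithSum_erase_of_notMem hR' hxR'⟩,
    ⟨R.erase x, erase_mem_subsetsWithSum_erase hR hxR⟩⟩

/-- Olson's bound. An element that lies in exactly one of two solutions splits the count into two
counts over a smaller set, neither of which is zero. -/
theorem two_pow_le_card_subsetsWithSum [DecidableEq G] (hd : IsDavenportBound G d) (g : ι → G)
    {W : Finset ι} {h : G} (hne : (subsetsWithSum g W h).Nonempty) :
    2 ^ (#W + 1 - d) ≤ #(subsetsWithSum g W h) := by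
  classical
  induction W using Finset.strongInduction generalizing h with
  | H W ih =>
    by_cases hW : d ≤ #W
    · obtain ⟨x, hx, hwithout, hwith⟩ := hd.exists_mem_subsetsWithSum_erase hW hne
      calc 2 ^ (#W + 1 - d)
          = 2 ^ (#(W.erase x) + 1 - d) + 2 ^ (#(W.erase x) + 1 - d) := by
            rw [← two_mul, ← pow_succ', card_erase_add_one hx, Nat.sub_add_comm hW]
        _ ≤ #(subsetsWithSum g (W.erase x) h) + #(subsetsWithSum g (W.erase x) (h - g x)) :=
            add_le_add (ih _ (erase_ssubset hx) hwithout) (ih _ (erase_ssubset hx) hwith)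
        _ = #(subsetsWithSum g W h) := by
            rw [← card_subsetsWithSum_insert g (notMem_erase x W), insert_erase hx]
    · rw [show #W + 1 - d = 0 by omega, pow_zero]
      exact hne.card_pos

/-- The complements of these supersets are the solutions counted by Olson's bound. -/
theorem exists_card_eq_two_pow_le_card_supersets [Fintype ι] [DecidableEq ι] [DecidableEq G]
    (hd : IsDavenportBound G d) (g : ι → G) {u : ℕ} (hu : u + d ≤ Fintype.card ι + 1) :
    ∃ U : Finset ι, #U = u ∧
      2 ^ (Fintype.card ι + 1 - (u + d)) ≤ #{S : Finset ι | U ⊆ S ∧ ∑ i ∈ S, g i = 0} := by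
  obtain ⟨Z, -, hZd, hZsum⟩ := hd.exists_card_lt_sum_eq g univ
  obtain ⟨W, hZW, -, hW⟩ := exists_subsuperset_card_eq (subset_univ Z)
    (n := Fintype.card ι - u) (by omega) (by rw [card_univ]; omega)
  refine ⟨Wᶜ, by rw [card_compl]; omega, ?_⟩
  have holson := hd.two_pow_le_card_subsetsWithSum g ⟨Z, mem_subsetsWithSum.mpr ⟨hZW, hZsum⟩⟩
  rw [hW, show Fintype.card ι - u + 1 - d = Fintype.card ι + 1 - (u + d) by omega] at holson
  refine holson.trans (card_le_card_of_injOn compl (fun R hR => ?_) compl_injective.injOn)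
  obtain ⟨hRW, hRsum⟩ := mem_subsetsWithSum.mp hR
  have hcompl : ∑ i ∈ Rᶜ, g i = 0 := by
    rwa [← sum_add_sum_compl R g, left_eq_add] at hRsum
  simpa using ⟨hRW, hcompl⟩

end IsDavenportBound

end ZeroSum

section IntegerSum

variable {ι : Type*}

theorem exists_subset_card_le_le_sum (s : Finset ι) (f : ι → ℤ) {δ : ℕ}
    (hδ : (δ : ℤ) ≤ ∑ i ∈ s, f i) : ∃ D ⊆ s, #D ≤ δ ∧ (δ : ℤ) ≤ ∑ i ∈ D, f i := by
  rcases le_total #{i ∈ s | 0 < f i} δ with hcard | hcard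
  · refine ⟨_, filter_subset _ s, hcard, hδ.trans ?_⟩
    rw [← sum_filter_add_sum_filter_not s (fun i => 0 < f i) f, add_le_iff_nonpos_right]
    exact sum_nonpos fun i hi => not_lt.mp (mem_filter.mp hi).2
  · obtain ⟨D, hD, rfl⟩ := exists_subset_card_eq hcard
    refine ⟨D, hD.trans (filter_subset _ s), le_rfl, ?_⟩
    simpa using card_nsmul_le_sum D f 1 fun i hi => (mem_filter.mp (hD hi)).2

theorem two_mul_card_le_sum_add_card_ones {U : Finset ι} {T : ι → ℤ} (hT : ∀ i ∈ U, 1 ≤ T i) :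
    2 * (#U : ℤ) ≤ ∑ i ∈ U, T i + #{i ∈ U | T i = 1} := by
  rw [card_filter, Nat.cast_sum, ← sum_add_distrib, mul_comm, ← nsmul_eq_mul]
  refine card_nsmul_le_sum U _ 2 fun i hi => ?_
  have := hT i hi
  split_ifs <;> push_cast <;> omega

theorem exists_subset_sum_sdiff_eq_sub_emod [DecidableEq ι] {n : ℕ} (hn : 1 ≤ n) {T : ι → ℤ}
    {P S : Finset ι} (hPS : P ⊆ S) (hP : n ≤ #P + 1) (hones : ∀ i ∈ P, T i = 1) :
    ∃ Q ⊆ P, ∑ i ∈ S \ Q, T i = ∑ i ∈ S, T i - (∑ i ∈ S, T i) % n := by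
  obtain ⟨r, hr⟩ := Int.eq_ofNat_of_zero_le
    (Int.emod_nonneg (∑ i ∈ S, T i) (show (n : ℤ) ≠ 0 by omega))
  have hrn : (∑ i ∈ S, T i) % n < n := Int.emod_lt_of_pos _ (by omega)
  obtain ⟨Q, hQP, hQ⟩ := exists_subset_card_eq (show r ≤ #P by omega)
  have hQsum : ∑ i ∈ Q, T i = r := by
    rw [sum_congr rfl fun i hi => hones i (hQP hi)]
    simp [hQ]
  exact ⟨Q, hQP, by rw [sum_sdiff_eq_sub (hQP.trans hPS), hQsum, hr]⟩

theorem le_sub_emod_of_dvd {m a s : ℤ} (hm : 0 < m) (ha : m ∣ a) (has : a ≤ s) :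
    a ≤ s - s % m := by
  calc a = m * (a / m) := (Int.mul_ediv_cancel' ha).symm
    _ ≤ m * (s / m) := mul_le_mul_of_nonneg_left (Int.ediv_le_ediv hm has) hm.le
    _ = s - s % m := eq_sub_of_add_eq (Int.mul_ediv_add_emod s m)

end IntegerSum

section IdempotentSum

variable {ι : Type*} [Fintype ι] {n L δ : ℕ} {T : ι → ℤ}

/-- The index sets of the idempotent-sum subsequences of the sequence over `C_{k;n}` with indices
`T i`, where `L` stands for `⌈k/n⌉ n`. The empty set is excluded by the second condition as soon as
`L` is positive. -/
def idempotentSumSubsets (n L : ℕ) (T : ι → ℤ) : Finset (Finset ι) :=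
  {S | (n : ℤ) ∣ ∑ i ∈ S, T i ∧ (L : ℤ) ≤ ∑ i ∈ S, T i}

theorem mem_idempotentSumSubsets {S : Finset ι} :
    S ∈ idempotentSumSubsets n L T ↔ (n : ℤ) ∣ ∑ i ∈ S, T i ∧ (L : ℤ) ≤ ∑ i ∈ S, T i := by
  simp [idempotentSumSubsets]

theorem natCard_nonempty_idempotentSum (hL : 0 < L) :
    Nat.card {S : Finset ι // S.Nonempty ∧ (n : ℤ) ∣ ∑ i ∈ S, T i ∧ (L : ℤ) ≤ ∑ i ∈ S, T i} =
      #(idempotentSumSubsets n L T) := by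
  refine Nat.subtype_card _ fun S => ?_
  have nonempty_of_le : (L : ℤ) ≤ ∑ i ∈ S, T i → S.Nonempty := fun hS =>
    nonempty_of_sum_ne_zero (f := T) (by omega)
  rw [mem_idempotentSumSubsets]
  exact ⟨fun h => ⟨nonempty_of_le h.2, h⟩, And.right⟩

theorem two_pow_sub_one_le_card_of_ones_subset [DecidableEq ι] (hn : 1 ≤ n) (hL : n ∣ L)
    (hT : ∀ i, 1 ≤ T i) {P Y : Finset ι} (hPY : P ⊆ Y) (hP : n ≤ #P + 1) (hones : ∀ i ∈ P, T i = 1)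
    (hY : (L : ℤ) ≤ ∑ i ∈ Y, T i + 1) :
    2 ^ #Yᶜ - 1 ≤ #(idempotentSumSubsets n L T) := by
  have hcard : #(Yᶜ.powerset.erase ∅) = 2 ^ #Yᶜ - 1 := by
    rw [card_erase_of_mem (empty_mem_powerset _), card_powerset]
  rw [← hcard]
  refine card_le_card_of_surjOn (· \ Y) fun A hA => ?_
  obtain ⟨hAne, hAY⟩ : A ≠ ∅ ∧ A ⊆ Yᶜ :=
    (mem_erase.mp hA).imp_right mem_powerset.mp
  have hdisj : Disjoint Y A := disjoint_left.mpr fun i hiY hiA => mem_compl.mp (hAY hiA) hiY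
  have hsum : (L : ℤ) ≤ ∑ i ∈ Y ∪ A, T i := by
    have hA1 : (#A : ℤ) ≤ ∑ i ∈ A, T i := by
      simpa using card_nsmul_le_sum A T 1 fun i _ => hT i
    have hApos : 0 < #A := card_pos.mpr (nonempty_iff_ne_empty.mpr hAne)
    rw [sum_union hdisj]
    omega
  obtain ⟨Q, hQP, hQ⟩ :=
    exists_subset_sum_sdiff_eq_sub_emod hn (hPY.trans subset_union_left) hP hones
  refine ⟨(Y ∪ A) \ Q, ?_, ?_⟩
  · rw [mem_coe, mem_idempotentSumSubsets, hQ]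
    exact ⟨Int.dvd_self_sub_emod,
      le_sub_emod_of_dvd (by omega) (Int.natCast_dvd_natCast.mpr hL) hsum⟩
  · have hrecover : ((Y ∪ A) \ Q) \ Y = A := by
      rw [sdiff_sdiff_left, sup_eq_union, union_eq_right.mpr (hQP.trans hPY),
        union_sdiff_cancel_left hdisj]
    exact hrecover

theorem two_pow_sub_one_le_card_of_many_ones (hn : 1 ≤ n) (hL : n ∣ L) (hδ : 2 * δ + n ≤ L)
    (hcard : L ≤ Fintype.card ι + δ) (hT : ∀ i, 1 ≤ T i) (hexcess : (δ : ℤ) ≤ ∑ i, (T i - 1))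
    (hones : n ≤ #{i | T i = 1} + 1) :
    2 ^ (Fintype.card ι + 1 + δ - L) - 1 ≤ #(idempotentSumSubsets n L T) := by
  classical
  obtain ⟨P, hPones, hP⟩ := exists_subset_card_eq (Nat.sub_le_of_le_add hones)
  obtain ⟨D, -, hD, hDexcess⟩ := exists_subset_card_le_le_sum univ _ hexcess
  obtain ⟨Y, hDPY, -, hY⟩ := exists_subsuperset_card_eq (subset_univ (D ∪ P))
    (n := L - δ - 1) (by have := card_union_le D P; omega) (by rw [card_univ]; omega)
  have hYexcess : (δ : ℤ) ≤ ∑ i ∈ Y, T i - #Y := by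
    calc (δ : ℤ) ≤ ∑ i ∈ D, (T i - 1) := hDexcess
      _ ≤ ∑ i ∈ Y, (T i - 1) := sum_le_sum_of_subset_of_nonneg (union_subset_left hDPY)
          fun i _ _ => sub_nonneg.mpr (hT i)
      _ = ∑ i ∈ Y, T i - #Y := by simp
  have hYcompl : #Yᶜ = Fintype.card ι + 1 + δ - L := by rw [card_compl]; omega
  rw [← hYcompl]
  exact two_pow_sub_one_le_card_of_ones_subset hn hL hT (union_subset_right hDPY) (by omega)
    (fun i hi => by simpa using hPones hi) (by omega)

theorem two_pow_le_card_of_few_ones (hδ : 2 * δ + 3 * n ≤ L + 2)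
    (hcard : L ≤ Fintype.card ι + δ) (hT : ∀ i, 1 ≤ T i) (hones : #{i | T i = 1} + 1 < n) :
    2 ^ (Fintype.card ι + 1 + δ - L) ≤ #(idempotentSumSubsets n L T) := by
  classical
  have : NeZero n := ⟨by omega⟩
  have hd : IsDavenportBound (ZMod n) n := by
    simpa using isDavenportBound_natCard (G := ZMod n)
  obtain ⟨U, hU, hsupersets⟩ := hd.exists_card_eq_two_pow_le_card_supersets
    (fun i => (T i : ZMod n)) (u := L - δ - n) (by omega)
  have hUsum : (L : ℤ) ≤ ∑ i ∈ U, T i := by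
    have htwo := two_mul_card_le_sum_add_card_ones (U := U) fun i _ => hT i
    have hUones : #{i ∈ U | T i = 1} ≤ #{i | T i = 1} :=
      card_le_card (filter_subset_filter _ (subset_univ U))
    omega
  rw [show Fintype.card ι + 1 - (L - δ - n + n) = Fintype.card ι + 1 + δ - L by omega]
    at hsupersets
  refine hsupersets.trans (card_le_card (monotone_filter_right _ fun S _ hS => ⟨?_, ?_⟩))
  · rw [← ZMod.intCast_zmod_eq_zero_iff_dvd, Int.cast_sum]
    exact hS.2
  · exact hUsum.trans (sum_le_sum_of_subset_of_nonneg hS.1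
      fun i _ _ => zero_le_one.trans (hT i))

end IdempotentSum

theorem stmt10_general {ι : Type*} [Fintype ι] {n L δ : ℕ} (hn : 1 ≤ n) (hL : n ∣ L)
    (hδ : 2 * δ + 3 * n ≤ L + 2) (T : ι → ℤ) (hT : ∀ i, 1 ≤ T i)
    (hM : Nat.card {S : Finset ι // S.Nonempty ∧ (n : ℤ) ∣ ∑ i ∈ S, T i ∧
        (L : ℤ) ≤ ∑ i ∈ S, T i} < 2 ^ (Fintype.card ι + 1 + δ - L) - 1) :
    ∑ i, (T i - 1) ≤ (δ : ℤ) - 1 := by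
  classical
  rw [natCard_nonempty_idempotentSum (by omega)] at hM
  have hcard : L ≤ Fintype.card ι + δ := by
    by_contra! hlt
    simp [show Fintype.card ι + 1 + δ - L = 0 by omega] at hM
  by_contra! hexcess
  rcases le_or_gt n (#{i | T i = 1} + 1) with hones | hones
  · have := two_pow_sub_one_le_card_of_many_ones hn hL (by omega) hcard hT (by omega) hones
    omega
  · have := two_pow_le_card_of_few_ones hδ hcard hT hones
    omega

end

theorem stmt10 {k n ℓ : ℕ} (hn : 1 ≤ n) (hkn : n < k) (δ : ℕ) (hδ1 : 1 ≤ δ)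
    (hδ2 : 2 * δ + 3 * n ≤ 2 * (((k + n - 1) / n * n + 1) / 2))
    (T : Fin ℓ → ℤ) (hT : ∀ i, 1 ≤ T i ∧ T i ≤ (k : ℤ) + n - 1)
    (hM : Nat.card {S : Finset (Fin ℓ) // S.Nonempty ∧ (n : ℤ) ∣ ∑ i ∈ S, T i ∧
        (((k + n - 1) / n * n : ℕ) : ℤ) ≤ ∑ i ∈ S, T i}
      < 2 ^ (ℓ + 1 + δ - (k + n - 1) / n * n) - 1) :
    (∑ i, (T i - 1)) ≤ (δ : ℤ) - 1 :=
  stmt10_general hn (dvd_mul_left n ((k + n - 1) / n)) (by omega) T (fun i => (hT i).1)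
    (by rwa [Fintype.card_fin])
end
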